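/- arXiv:1410.1232 — 2 statements merged into one kernel-verified Lean document; each statement's English description precedes it below -/
import Mathlib

section
/- Let L be a real symmetric matrix of the structural form described in the context (size 2(N+1)), and suppose L_{2j-1,2j} ≠ 0 for all j = 1, …, N+1 and L_{2j,2j+2} ≠ 0 for all j = 1, …, N. Then every eigenvalue of L has geometric multiplicity one, i.e., for every real λ the eigenspace {X ∈ ℝ^{2(N+1)} : LX = λX} has dimension at most 1. -/
open Matrix

/-- A real symmetric `2(N+1) × 2(N+1)` matrix `L` has the *structural form* if its only
possibly nonzero entries (in 1-based indexing, together with the symmetrically placed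
entries) are: the even diagonal entries `L_{2j,2j}` for `j = 1, …, N+1`; the entries
`L_{2j-1,2j}` for `j = 1, …, N+1`; and the entries `L_{2j,2j+2}` for `j = 1, …, N`.
(Here indices are 0-based, so `L_{2j,2j}` is `L i i` with `i` odd, `L_{2j-1,2j}` is
`L i (i+1)` with `i` even, and `L_{2j,2j+2}` is `L i (i+2)` with `i` odd.) -/
def StructForm (N : ℕ) (L : Matrix (Fin (2 * (N + 1))) (Fin (2 * (N + 1))) ℝ) : Prop :=
  Lᵀ = L ∧
    ∀ i j : Fin (2 * (N + 1)), i.val ≤ j.val → L i j ≠ 0 →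
      (j.val = i.val ∧ i.val % 2 = 1) ∨
      (j.val = i.val + 1 ∧ i.val % 2 = 0) ∨
      (j.val = i.val + 2 ∧ i.val % 2 = 1)

/-! Reordering the coordinates as `(x, y)`, with `x` the even and `y` the odd ones (0-based), turns
`L` into a block matrix `[[0, B], [C, D]]` with `B`, `C` invertible diagonal and `D` tridiagonal,
so that the eigenvalue equation reads `B y = μ x`, `C x + D y = μ y`. If `μ = 0` this forces `y = 0`
and then `x = 0`. If `μ ≠ 0`, eliminating `x = μ⁻¹ B y` gives `(D + μ⁻¹ C B) y = μ y`, where the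
tridiagonal matrix on the left has the nonvanishing superdiagonal of `D`; its rows determine each
coordinate of `y` from the previous ones, hence all of `y` from its first coordinate. -/

theorem finrank_le_finrank_of_mapsTo_of_forall_eq_zero {R V W : Type*} [Ring R]
    [StrongRankCondition R] [AddCommGroup V] [Module R V] [AddCommGroup W] [Module R W]
    {p : Submodule R V} {q : Submodule R W} [Module.Finite R q] (f : V →ₗ[R] W)
    (hmaps : ∀ x ∈ p, f x ∈ q) (hzero : ∀ x ∈ p, f x = 0 → x = 0) :
    Module.finrank R p ≤ Module.finrank R q := by
  refine LinearMap.finrank_le_finrank_of_injective (f := f.restrict hmaps) ?_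
  rw [injective_iff_map_eq_zero]
  intro x hx
  exact Subtype.ext (hzero x x.2 (congrArg Subtype.val hx))

section Hessenberg

/-- A square matrix is *lower Hessenberg* if all its entries above the superdiagonal vanish.
Tridiagonal (Jacobi) matrices are examples. -/
def IsLowerHessenberg {R : Type*} [Zero R] {n : ℕ} (M : Matrix (Fin n) (Fin n) R) : Prop :=
  ∀ ⦃i j : Fin n⦄, i.val + 1 < j.val → M i j = 0

theorem IsLowerHessenberg.add_isDiag {R : Type*} [AddZeroClass R] {n : ℕ}
    {M A : Matrix (Fin n) (Fin n) R} (hM : IsLowerHessenberg M) (hA : A.IsDiag) :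
    IsLowerHessenberg (M + A) := by
  intro i j hij
  have hne : i ≠ j := by
    rintro rfl
    omega
  rw [Matrix.add_apply, hM hij, hA hne, add_zero]

theorem IsLowerHessenberg.eq_zero_of_mulVec_eq_smul {R : Type*}
    [NonUnitalNonAssocSemiring R] [NoZeroDivisors R] {n : ℕ}
    {M : Matrix (Fin (n + 1)) (Fin (n + 1)) R} (hM : IsLowerHessenberg M)
    (hsuper : ∀ i : Fin n, M i.castSucc i.succ ≠ 0) {μ : R} {v : Fin (n + 1) → R}
    (hv : M *ᵥ v = μ • v) (hv₀ : v 0 = 0) : v = 0 := by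
  suffices ∀ j, v j = 0 from funext this
  intro j
  induction j using WellFoundedLT.induction with
  | ind j ih =>
    cases j using Fin.cases with
    | zero => exact hv₀
    | succ i =>
      have hsum : (M *ᵥ v) i.castSucc = M i.castSucc i.succ * v i.succ := by
        refine Finset.sum_eq_single_of_mem i.succ (Finset.mem_univ _) fun k _ hk ↦ ?_
        rcases lt_or_gt_of_ne hk with hlt | hgt
        · exact mul_eq_zero_of_right _ (ih k hlt)
        · exact mul_eq_zero_of_left (hM (i := i.castSucc) (j := k) hgt) _
      have hrow : M i.castSucc i.succ * v i.succ = 0 := by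
        rw [← hsum, hv, Pi.smul_apply, ih _ i.castSucc_lt_succ, smul_zero]
      exact (mul_eq_zero.mp hrow).resolve_left (hsuper i)

theorem IsLowerHessenberg.finrank_eigenspace_le_one {R : Type*} [CommRing R] [IsDomain R]
    {n : ℕ} {M : Matrix (Fin (n + 1)) (Fin (n + 1)) R} (hM : IsLowerHessenberg M)
    (hsuper : ∀ i : Fin n, M i.castSucc i.succ ≠ 0) (μ : R) :
    Module.finrank R (Module.End.eigenspace (toLin' M) μ) ≤ 1 := by
  calc Module.finrank R (Module.End.eigenspace (toLin' M) μ)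
    _ ≤ Module.finrank R (⊤ : Submodule R R) :=
        finrank_le_finrank_of_mapsTo_of_forall_eq_zero (LinearMap.proj 0)
          (fun _ _ ↦ Submodule.mem_top) fun _ hv hv₀ ↦
            hM.eq_zero_of_mulVec_eq_smul hsuper (Module.End.mem_eigenspace_iff.mp hv) hv₀
    _ = 1 := by rw [finrank_top, Module.finrank_self]

end Hessenberg

section Diagonal

variable {R m : Type*} [Fintype m]

theorem isDiag_mul [NonUnitalNonAssocSemiring R] {A B : Matrix m m R} (hA : A.IsDiag)
    (hB : B.IsDiag) : (A * B).IsDiag := by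
  classical
  rw [← hA.diagonal_diag, ← hB.diagonal_diag, diagonal_mul_diagonal]
  exact isDiag_diagonal _

theorem mulVec_injective_of_isDiag [Ring R] [NoZeroDivisors R] {A : Matrix m m R} (hA : A.IsDiag)
    (hne : ∀ i, A i i ≠ 0) : Function.Injective A.mulVec := by
  classical
  rw [← hA.diagonal_diag]
  intro v w hvw
  ext i
  have hi : A i i * v i = A i i * w i := by
    simpa only [mulVec_diagonal, diag_apply] using congrFun hvw i
  exact mul_left_cancel₀ (hne i) hi

end Diagonal

section Blocks

variable {R K m n : Type*} [Fintype m] [Fintype n]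

theorem fromBlocks_zero₁₁_mulVec_eq_smul_iff [NonUnitalNonAssocSemiring R] {B : Matrix m n R}
    {C : Matrix n m R} {D : Matrix n n R} {μ : R} {v : m ⊕ n → R} :
    fromBlocks 0 B C D *ᵥ v = μ • v ↔
      B *ᵥ (v ∘ Sum.inr) = μ • (v ∘ Sum.inl) ∧
        C *ᵥ (v ∘ Sum.inl) + D *ᵥ (v ∘ Sum.inr) = μ • (v ∘ Sum.inr) := by
  simp [fromBlocks_mulVec, funext_iff]

variable [DecidableEq m] [DecidableEq n]

theorem eigenspace_zero_fromBlocks_zero₁₁ [CommRing R] {B : Matrix m n R} {C : Matrix n m R}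
    (D : Matrix n n R) (hB : Function.Injective B.mulVec) (hC : Function.Injective C.mulVec) :
    Module.End.eigenspace (toLin' (fromBlocks 0 B C D)) 0 = ⊥ := by
  rw [Submodule.eq_bot_iff]
  intro v hv
  rw [Module.End.mem_eigenspace_iff, toLin'_apply,
    fromBlocks_zero₁₁_mulVec_eq_smul_iff, zero_smul, zero_smul] at hv
  obtain ⟨hBv, hCDv⟩ := hv
  have hinr : v ∘ Sum.inr = 0 := hB (hBv.trans (mulVec_zero B).symm)
  rw [hinr, mulVec_zero, add_zero] at hCDv
  have hinl : v ∘ Sum.inl = 0 := hC (hCDv.trans (mulVec_zero C).symm)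
  rw [← Sum.elim_comp_inl_inr v, hinl, hinr, Sum.elim_zero_zero]

theorem finrank_eigenspace_fromBlocks_zero₁₁_le [Field K] (B : Matrix m n K) (C : Matrix n m K)
    (D : Matrix n n K) {μ : K} (hμ : μ ≠ 0) :
    Module.finrank K (Module.End.eigenspace (toLin' (fromBlocks 0 B C D)) μ) ≤
      Module.finrank K (Module.End.eigenspace (toLin' (D + μ⁻¹ • (C * B))) μ) := by
  have hsolve : ∀ v ∈ Module.End.eigenspace (toLin' (fromBlocks 0 B C D)) μ,
      v ∘ Sum.inl = μ⁻¹ • B *ᵥ (v ∘ Sum.inr) ∧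
        C *ᵥ (v ∘ Sum.inl) + D *ᵥ (v ∘ Sum.inr) = μ • (v ∘ Sum.inr) := by
    intro v hv
    rwa [Module.End.mem_eigenspace_iff, toLin'_apply,
      fromBlocks_zero₁₁_mulVec_eq_smul_iff, eq_comm, ← eq_inv_smul_iff₀ hμ] at hv
  refine finrank_le_finrank_of_mapsTo_of_forall_eq_zero (LinearMap.funLeft K K Sum.inr)
    (fun v hv ↦ ?_) fun v hv hinr ↦ ?_
  · obtain ⟨hinl, hCD⟩ := hsolve v hv
    rw [Module.End.mem_eigenspace_iff, toLin'_apply]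
    change (D + μ⁻¹ • (C * B)) *ᵥ (v ∘ Sum.inr) = μ • (v ∘ Sum.inr)
    rw [← hCD, hinl, add_mulVec, smul_mulVec, ← mulVec_mulVec, mulVec_smul, add_comm]
  · change v ∘ Sum.inr = 0 at hinr
    have hinl := (hsolve v hv).1
    rw [hinr, mulVec_zero, smul_zero] at hinl
    rw [← Sum.elim_comp_inl_inr v, hinl, hinr, Sum.elim_zero_zero]

theorem finrank_eigenspace_submatrix_equiv [CommRing R] (M : Matrix m m R) (e : n ≃ m) (μ : R) :
    Module.finrank R (Module.End.eigenspace (toLin' (M.submatrix e e)) μ) =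
      Module.finrank R (Module.End.eigenspace (toLin' M) μ) := by
  have hmap : Module.End.eigenspace (toLin' (M.submatrix e e)) μ =
      (Module.End.eigenspace (toLin' M) μ).map
        (LinearEquiv.funCongrLeft R R e : (m → R) →ₗ[R] n → R) := by
    ext v
    rw [Submodule.mem_map_equiv, Module.End.mem_eigenspace_iff, Module.End.mem_eigenspace_iff,
      toLin'_apply, toLin'_apply, submatrix_mulVec_equiv, ← Equiv.eq_comp_symm]
    rfl
  rw [hmap, LinearEquiv.finrank_map_eq]

end Blocks

section Parity

variable {n : ℕ}

/-- The position `2 * j` in a vector of length `2 * n`; in the 1-based indexing of the theorem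
these are the odd positions. -/
def evenIndex (j : Fin n) : Fin (2 * n) := ⟨2 * j, by omega⟩

/-- The position `2 * j + 1` in a vector of length `2 * n`; in the 1-based indexing of the theorem
these are the even positions. -/
def oddIndex (j : Fin n) : Fin (2 * n) := ⟨2 * j + 1, by omega⟩

/-- The splitting of the positions of a vector of length `2 * n` by parity, with the even positions
(0-based) in the left summand. -/
def parityEquiv (n : ℕ) : Fin n ⊕ Fin n ≃ Fin (2 * n) where
  toFun := Sum.elim evenIndex oddIndex
  invFun i :=
    if i.val % 2 = 0 then Sum.inl ⟨i / 2, by omega⟩ else Sum.inr ⟨i / 2, by omega⟩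
  left_inv := by
    rintro (j | j)
    · simp [evenIndex]
    · simp [oddIndex, Nat.add_mod, Nat.mul_add_div]
  right_inv i := by
    dsimp only
    split_ifs <;> ext <;> simp only [Sum.elim_inl, Sum.elim_inr, evenIndex, oddIndex] <;> omega

theorem submatrix_parityEquiv {R : Type*} (M : Matrix (Fin (2 * n)) (Fin (2 * n)) R) :
    M.submatrix (parityEquiv n) (parityEquiv n) =
      fromBlocks (M.submatrix evenIndex evenIndex) (M.submatrix evenIndex oddIndex)
        (M.submatrix oddIndex evenIndex) (M.submatrix oddIndex oddIndex) := by
  ext (i | i) (j | j) <;> rfl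

end Parity

theorem stmt_14_general {K : Type*} [Field K] {N : ℕ}
    {L : Matrix (Fin (2 * (N + 1))) (Fin (2 * (N + 1))) K}
    (hee : L.submatrix evenIndex evenIndex = 0)
    (heo : (L.submatrix evenIndex oddIndex).IsDiag)
    (hoe : (L.submatrix oddIndex evenIndex).IsDiag)
    (hoo : IsLowerHessenberg (L.submatrix oddIndex oddIndex))
    (hb : ∀ j, L (evenIndex j) (oddIndex j) ≠ 0) (hb' : ∀ j, L (oddIndex j) (evenIndex j) ≠ 0)
    (hc : ∀ j : Fin N, L (oddIndex j.castSucc) (oddIndex j.succ) ≠ 0) (μ : K) :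
    Module.finrank K (Module.End.eigenspace (toLin' L) μ) ≤ 1 := by
  rw [← finrank_eigenspace_submatrix_equiv L (parityEquiv (N + 1)), submatrix_parityEquiv, hee]
  rcases eq_or_ne μ 0 with rfl | hμ
  · rw [eigenspace_zero_fromBlocks_zero₁₁ _ (mulVec_injective_of_isDiag heo hb)
      (mulVec_injective_of_isDiag hoe hb'), finrank_bot]
    exact zero_le_one
  · have hdiag := (isDiag_mul hoe heo).smul μ⁻¹
    refine (finrank_eigenspace_fromBlocks_zero₁₁_le _ _ _ hμ).trans
      ((hoo.add_isDiag hdiag).finrank_eigenspace_le_one (fun j ↦ ?_) μ)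
    rw [Matrix.add_apply, hdiag j.castSucc_lt_succ.ne, add_zero]
    exact hc j

namespace StructForm

variable {N : ℕ} {L : Matrix (Fin (2 * (N + 1))) (Fin (2 * (N + 1))) ℝ}

theorem apply_comm (hL : StructForm N L) (i j : Fin (2 * (N + 1))) : L i j = L j i :=
  congrFun (congrFun hL.1.symm i) j

theorem index_cases_of_apply_ne_zero (hL : StructForm N L) {i j : Fin (2 * (N + 1))}
    (hij : L i j ≠ 0) :
    (j.val = i.val ∧ i.val % 2 = 1) ∨ (j.val = i.val + 1 ∧ i.val % 2 = 0) ∨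
      (j.val = i.val + 2 ∧ i.val % 2 = 1) ∨ (i.val = j.val + 1 ∧ j.val % 2 = 0) ∨
      (i.val = j.val + 2 ∧ j.val % 2 = 1) := by
  rcases le_total i.val j.val with hle | hle
  · have := hL.2 i j hle hij
    omega
  · have := hL.2 j i hle (hL.apply_comm i j ▸ hij)
    omega

theorem submatrix_even_even (hL : StructForm N L) : L.submatrix evenIndex evenIndex = 0 := by
  ext i j
  by_contra hne
  have := hL.index_cases_of_apply_ne_zero hne
  simp only [evenIndex] at this
  omega

theorem isDiag_submatrix_even_odd (hL : StructForm N L) :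
    (L.submatrix evenIndex oddIndex).IsDiag := by
  intro i j hij
  by_contra hne
  have := hL.index_cases_of_apply_ne_zero hne
  simp only [evenIndex, oddIndex] at this
  omega

theorem isDiag_submatrix_odd_even (hL : StructForm N L) :
    (L.submatrix oddIndex evenIndex).IsDiag := by
  have hT := hL.isDiag_submatrix_even_odd.transpose
  rwa [transpose_submatrix, hL.1] at hT

theorem isLowerHessenberg_submatrix_odd_odd (hL : StructForm N L) :
    IsLowerHessenberg (L.submatrix oddIndex oddIndex) := by
  intro i j hij
  by_contra hne
  have := hL.index_cases_of_apply_ne_zero hne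
  simp only [oddIndex] at this
  omega

end StructForm

/-- If `L` has the structural form, all entries `L_{2j-1,2j}` (for `j = 1, …, N+1`) are
nonzero and all entries `L_{2j,2j+2}` (for `j = 1, …, N`) are nonzero, then every
eigenvalue of `L` has geometric multiplicity one: each eigenspace has dimension at
most `1`. -/
theorem stmt_14 (N : ℕ) (L : Matrix (Fin (2 * (N + 1))) (Fin (2 * (N + 1))) ℝ)
    (hL : StructForm N L)
    (hb : ∀ j : Fin (N + 1),
      L ⟨2 * j.val, by have := j.isLt; omega⟩ ⟨2 * j.val + 1, by have := j.isLt; omega⟩ ≠ 0)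
    (hc : ∀ j : Fin N,
      L ⟨2 * j.val + 1, by have := j.isLt; omega⟩ ⟨2 * j.val + 3, by have := j.isLt; omega⟩ ≠ 0) :
    ∀ lam : ℝ,
      Module.finrank ℝ (Module.End.eigenspace (Matrix.toLin' L) lam) ≤ 1 := by
  exact stmt_14_general hL.submatrix_even_even hL.isDiag_submatrix_even_odd
    hL.isDiag_submatrix_odd_even hL.isLowerHessenberg_submatrix_odd_odd hb
    (fun j ↦ hL.apply_comm _ _ ▸ hb j) hc
end

section
/- For all 0 ≤ i, j ≤ N, the (1,2) entry of the block M̃^{i,j} = ∫_{-1}^{α} P_i(x) W_{p,n}(x) P_j(x)^T dx equals (1-α²)^{n/2} · p(n-p) / ((n+1)²(p+i)(n-p+j)) · C_i^{(n+1)/2}(α) · C_j^{(n+1)/2}(α). -/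
open Matrix

/-- Pochhammer symbol `(a)_k = a (a+1) ⋯ (a+k-1)`. -/
noncomputable def poch (a : ℝ) (k : ℕ) : ℝ := ∏ i ∈ Finset.range k, (a + i)

/-- Gegenbauer polynomial `C_w^λ(x)`, with the convention `C_w^λ = 0` for `w < 0`. -/
noncomputable def geg (l : ℝ) (w : ℤ) (x : ℝ) : ℝ :=
  if w < 0 then 0 else
    poch (2 * l) w.toNat / (w.toNat.factorial : ℝ) *
      ∑ k ∈ Finset.range (w.toNat + 1),
        (poch (-(w.toNat : ℝ)) k * poch ((w.toNat : ℝ) + 2 * l) k) /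
            (poch (l + 1 / 2) k * (k.factorial : ℝ)) * ((1 - x) / 2) ^ k

/-- The weight matrix `W_{p,n}(x)`. -/
noncomputable def Wmat (n : ℕ) (p : ℝ) (x : ℝ) : Matrix (Fin 2) (Fin 2) ℝ :=
  (1 - x ^ 2) ^ ((n : ℝ) / 2 - 1) •
    !![p * x ^ 2 + (n : ℝ) - p, -(n : ℝ) * x; -(n : ℝ) * x, ((n : ℝ) - p) * x ^ 2 + p]

/-- The matrix valued polynomial `P_w`. -/
noncomputable def Pmat (n : ℕ) (p : ℝ) (w : ℕ) (x : ℝ) : Matrix (Fin 2) (Fin 2) ℝ :=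
  !![1 / ((n : ℝ) + 1) * geg (((n : ℝ) + 1) / 2) (w : ℤ) x +
        1 / (p + w) * geg (((n : ℝ) + 3) / 2) ((w : ℤ) - 2) x,
      1 / (p + w) * geg (((n : ℝ) + 3) / 2) ((w : ℤ) - 1) x;
      1 / ((n : ℝ) - p + w) * geg (((n : ℝ) + 3) / 2) ((w : ℤ) - 1) x,
      1 / ((n : ℝ) + 1) * geg (((n : ℝ) + 1) / 2) (w : ℤ) x +
        1 / ((n : ℝ) - p + w) * geg (((n : ℝ) + 3) / 2) ((w : ℤ) - 2) x]

/-!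
Write `C_w = C_w^{(n+1)/2}`, so that `C_w' = (n+1) C_{w-1}^{(n+3)/2}`. The contiguous relation
`x C_w' - C_{w-1}' = w C_w` turns the rows of `P_w` into
`(p C_w + x C_w', C_w') / ((n+1)(p+w))` and `(C_w', (n-p) C_w + x C_w') / ((n+1)(n-p+w))`.
Multiplying out, the `(1,2)` entry of `P_i W P_jᵀ` is a constant multiple of
`(1-x²)^{n/2-1} ((1-x²) (C_i C_j)' - n x C_i C_j)`, which is the derivative of
`(1-x²)^{n/2} C_i C_j`.
-/

section Pochhammer

lemma poch_eq_eval_ascPochhammer (a : ℝ) (k : ℕ) : poch a k = (ascPochhammer ℝ k).eval a := by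
  induction k with
  | zero => simp [poch]
  | succ k ih => rw [ascPochhammer_succ_eval, ← ih, poch, Finset.prod_range_succ, poch]

lemma poch_succ (a : ℝ) (k : ℕ) : poch a (k + 1) = poch a k * (a + k) :=
  Finset.prod_range_succ _ _

lemma poch_succ_left (a : ℝ) (k : ℕ) : poch a (k + 1) = a * poch (a + 1) k := by
  simp [poch_eq_eval_ascPochhammer, ascPochhammer_succ_left]

lemma poch_mul_poch_add (a : ℝ) (m k : ℕ) : poch a m * poch (m + a) k = poch a (m + k) := by
  simp only [poch_eq_eval_ascPochhammer, ← ascPochhammer_mul ℝ m k]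
  simp [add_comm]

lemma add_natCast_mul_poch (a : ℝ) (k : ℕ) : (a + k) * poch a k = a * poch (a + 1) k := by
  rw [mul_comm, ← poch_succ, poch_succ_left]

lemma poch_pos {a : ℝ} (ha : 0 < a) (k : ℕ) : 0 < poch a k :=
  poch_eq_eval_ascPochhammer a k ▸ ascPochhammer_pos k a ha

lemma poch_neg_natCast_of_lt {m k : ℕ} (h : m < k) : poch (-(m : ℝ)) k = 0 := by
  rw [poch_eq_eval_ascPochhammer, ascPochhammer_eval_neg_coe_nat_of_lt h]

lemma poch_neg_add_one_succ (a : ℝ) (k : ℕ) :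
    poch (-(a + 1)) (k + 1) = -(a + 1) * poch (-a) k := by
  rw [poch_succ_left, neg_add_rev, neg_add_cancel_comm]

end Pochhammer

section GegenbauerCoefficients

/-- The coefficient of `((1 - x) / 2) ^ k` in the Gegenbauer polynomial `C_w^l(x)`. The factors
`(2l)_w (w + 2l)_k` of the hypergeometric expansion are merged into `(2l)_{w+k}`. -/
noncomputable def gegCoeff (l : ℝ) (w k : ℕ) : ℝ :=
  poch (2 * l) (w + k) * poch (-(w : ℝ)) k / (w.factorial * (poch (l + 1 / 2) k * k.factorial))

lemma gegCoeff_eq_zero_of_lt (l : ℝ) {w k : ℕ} (h : w < k) : gegCoeff l w k = 0 := by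
  simp [gegCoeff, poch_neg_natCast_of_lt h]

variable {l : ℝ}

lemma succ_mul_gegCoeff_succ_succ (hl : -1 / 2 < l) (m k : ℕ) :
    (k + 1) * gegCoeff l (m + 1) (k + 1) = -4 * l * gegCoeff (l + 1) m k := by
  have poch_half : poch (l + 1 / 2) (k + 1) = (l + 1 / 2) * poch (l + 1 + 1 / 2) k := by
    rw [poch_succ_left, add_right_comm]
  have poch_two_mul : poch (2 * l) (m + 1 + (k + 1)) =
      4 * l * ((l + 1 / 2) * poch (2 * (l + 1)) (m + k)) := by
    rw [show m + 1 + (k + 1) = m + k + 1 + 1 by ring, poch_succ_left, poch_succ_left,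
      show 2 * l + 1 + 1 = 2 * (l + 1) by ring]
    ring
  have : poch (l + 1 + 1 / 2) k ≠ 0 := (poch_pos (by linarith) k).ne'
  have half_ne : l + 1 / 2 ≠ 0 := by linarith
  rw [gegCoeff, gegCoeff, poch_half, poch_two_mul, Nat.cast_succ, poch_neg_add_one_succ,
    Nat.factorial_succ, Nat.factorial_succ]
  -- `field_simp` would rewrite `l + 1 / 2` to `(2 * l + 1) / 2`, which `half_ne` does not match.
  generalize l + 1 / 2 = h at *
  push_cast
  field_simp

lemma sub_mul_gegCoeff_succ (l : ℝ) (m k : ℕ) :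
    (m + 1 - k) * gegCoeff l (m + 1) k = poch (2 * l) (m + 1 + k) * poch (-(m : ℝ)) k /
      (m.factorial * (poch (l + 1 / 2) k * k.factorial)) := by
  have poch_neg : (m + 1 - k) * poch (-(m + 1 : ℝ)) k = (m + 1) * poch (-(m : ℝ)) k := by
    have h := add_natCast_mul_poch (-(m + 1 : ℝ)) k
    rw [show -(m + 1 : ℝ) + 1 = -m by ring] at h
    linear_combination -h
  rw [gegCoeff, Nat.cast_succ, ← mul_div_assoc, mul_left_comm, poch_neg, Nat.factorial_succ,
    Nat.cast_mul, Nat.cast_succ, mul_left_comm, mul_assoc, mul_div_mul_left]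
  positivity

lemma succ_mul_gegCoeff_sub_gegCoeff_succ (hl : -1 / 2 < l) (m k : ℕ) :
    (k + 1) * (gegCoeff l m (k + 1) - gegCoeff l (m + 1) (k + 1)) =
      2 * ((m + 1 - k) * gegCoeff l (m + 1) k) := by
  have poch_two_mul : poch (2 * l) (m + 1 + (k + 1)) =
      poch (2 * l) (m + 1 + k) * (2 * (l + 1 / 2 + k) + (m - k)) := by
    rw [← add_assoc, poch_succ]
    push_cast
    ring
  have half_add_ne : l + 1 / 2 + k ≠ 0 := by linarith [k.cast_nonneg (α := ℝ)]
  have : poch (l + 1 / 2) k ≠ 0 := (poch_pos (by linarith) k).ne'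
  rw [sub_mul_gegCoeff_succ, gegCoeff, gegCoeff, poch_two_mul, Nat.cast_succ m,
    poch_neg_add_one_succ, poch_succ (-(m : ℝ)), poch_succ (l + 1 / 2),
    show m + (k + 1) = m + 1 + k by ring, Nat.factorial_succ, Nat.factorial_succ]
  generalize l + 1 / 2 + k = h at *
  push_cast
  field_simp
  ring

end GegenbauerCoefficients

section GegenbauerPolynomial

open Polynomial

/-- The Gegenbauer polynomial in the variable `t = (1 - x) / 2`, that is, the polynomial `Q`
with `C_w^l(x) = Q((1 - x) / 2)`. -/
noncomputable def shiftedGeg (l : ℝ) (w : ℕ) : ℝ[X] :=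
  ∑ k ∈ Finset.range (w + 1), C (gegCoeff l w k) * X ^ k

lemma coeff_shiftedGeg (l : ℝ) (w k : ℕ) : (shiftedGeg l w).coeff k = gegCoeff l w k := by
  simp only [shiftedGeg, finsetSum_coeff, coeff_C_mul_X_pow, Finset.sum_ite_eq, Finset.mem_range]
  split_ifs with hk
  · rfl
  · rw [gegCoeff_eq_zero_of_lt l (by omega)]

lemma derivative_shiftedGeg_succ {l : ℝ} (hl : -1 / 2 < l) (m : ℕ) :
    derivative (shiftedGeg l (m + 1)) = C (-4 * l) * shiftedGeg (l + 1) m := by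
  ext k
  rw [coeff_derivative, coeff_C_mul, coeff_shiftedGeg, coeff_shiftedGeg, mul_comm,
    succ_mul_gegCoeff_succ_succ hl]

lemma derivative_shiftedGeg_sub_derivative_shiftedGeg_succ {l : ℝ} (hl : -1 / 2 < l) (m : ℕ) :
    derivative (shiftedGeg l m) - derivative (shiftedGeg l (m + 1)) =
      C 2 * (C (m + 1 : ℝ) * shiftedGeg l (m + 1) - X * derivative (shiftedGeg l (m + 1))) := by
  ext k
  have hX : (X * derivative (shiftedGeg l (m + 1))).coeff k = k * gegCoeff l (m + 1) k := by
    cases k with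
    | zero => simp
    | succ k => rw [coeff_X_mul, coeff_derivative, coeff_shiftedGeg]; push_cast; ring
  rw [coeff_C_mul, coeff_sub, coeff_sub, hX, coeff_C_mul]
  simp only [coeff_derivative, coeff_shiftedGeg]
  linear_combination succ_mul_gegCoeff_sub_gegCoeff_succ hl m k

lemma geg_of_neg (l : ℝ) {w : ℤ} (hw : w < 0) : geg l w = 0 := by
  ext x
  simp [geg, hw]

lemma geg_natCast (l : ℝ) (w : ℕ) :
    geg l w = fun x => (shiftedGeg l w).eval ((1 - x) / 2) := by
  ext x
  simp only [geg, (Int.natCast_nonneg w).not_gt, if_false, Int.toNat_natCast, shiftedGeg,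
    eval_finsetSum, eval_mul, eval_C, eval_pow, eval_X, Finset.mul_sum]
  refine Finset.sum_congr rfl fun k _ => ?_
  rw [gegCoeff, ← poch_mul_poch_add, ← mul_assoc, div_mul_div_comm]
  ring

lemma geg_zero (l : ℝ) : geg l 0 = 1 := by
  ext x
  simp [geg, poch]

lemma contDiff_geg (l : ℝ) (w : ℤ) {r : WithTop ℕ∞} : ContDiff ℝ r (geg l w) := by
  cases w with
  | ofNat w =>
    rw [Int.ofNat_eq_natCast, geg_natCast]
    have hQ : ContDiff ℝ r fun t : ℝ => (shiftedGeg l w).eval t := by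
      simpa using (shiftedGeg l w).contDiff_aeval (𝕜 := ℝ) r
    exact hQ.comp (f := fun x : ℝ => (1 - x) / 2) (by fun_prop)
  | negSucc w =>
    rw [geg_of_neg l (Int.negSucc_lt_zero w)]
    exact contDiff_const

lemma deriv_geg_natCast (l : ℝ) (w : ℕ) (x : ℝ) :
    deriv (geg l w) x = -(derivative (shiftedGeg l w)).eval ((1 - x) / 2) / 2 := by
  have inner : HasDerivAt (fun x : ℝ => (1 - x) / 2) (-1 / 2) x :=
    ((hasDerivAt_id x).const_sub 1).div_const 2
  rw [geg_natCast]
  exact ((((shiftedGeg l w).hasDerivAt _).comp x inner).congr_deriv (by ring)).deriv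

lemma deriv_geg {l : ℝ} (hl : -1 / 2 < l) (w : ℤ) (x : ℝ) :
    deriv (geg l w) x = 2 * l * geg (l + 1) (w - 1) x := by
  obtain hw | rfl | hw := lt_trichotomy w 0
  · simp [geg_of_neg l hw, geg_of_neg (l + 1) (show w - 1 < 0 by omega)]
  · simp [geg_zero, geg_of_neg]
  · obtain ⟨m, rfl⟩ : ∃ m : ℕ, w = (m + 1 : ℕ) := Int.eq_succ_of_zero_lt hw
    rw [deriv_geg_natCast, derivative_shiftedGeg_succ hl, eval_mul, eval_C, Nat.cast_succ,
      add_sub_cancel_right, geg_natCast]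
    ring

lemma mul_deriv_geg_sub_deriv_geg_sub_one {l : ℝ} (hl : -1 / 2 < l) (w : ℤ) (x : ℝ) :
    x * deriv (geg l w) x - deriv (geg l (w - 1)) x = w * geg l w x := by
  obtain hw | rfl | hw := lt_trichotomy w 0
  · simp [geg_of_neg l hw, geg_of_neg l (show w - 1 < 0 by omega)]
  · simp [geg_zero, geg_of_neg]
  · obtain ⟨m, rfl⟩ : ∃ m : ℕ, w = (m + 1 : ℕ) := Int.eq_succ_of_zero_lt hw
    have hrec := congrArg (eval ((1 - x) / 2))
      (derivative_shiftedGeg_sub_derivative_shiftedGeg_succ hl m)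
    simp only [eval_sub, eval_mul, eval_C, eval_X] at hrec
    rw [show ((m + 1 : ℕ) : ℤ) - 1 = m by simp, deriv_geg_natCast, deriv_geg_natCast, geg_natCast]
    push_cast
    linear_combination hrec / 2

end GegenbauerPolynomial

section WeightedIntegral

open MeasureTheory Set

lemma intervalIntegrable_one_sub_sq_rpow {s : ℝ} (hs : -1 < s) :
    IntervalIntegrable (fun x : ℝ => (1 - x ^ 2) ^ s) volume (-1) 1 := by
  have left_half : IntervalIntegrable (fun x : ℝ => (1 - x ^ 2) ^ s) volume (-1) 0 := by
    have singular : IntervalIntegrable (fun x : ℝ => (x + 1) ^ s) volume (-1) 0 := by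
      simpa using (intervalIntegral.intervalIntegrable_rpow' (a := 0) (b := 1) hs).comp_add_right 1
    have regular : ContinuousOn (fun x : ℝ => (1 - x) ^ s) (uIcc (-1) 0) := by
      refine ContinuousOn.rpow_const (by fun_prop) fun x hx => Or.inl ?_
      rw [uIcc_of_le (by norm_num)] at hx
      linarith [hx.2]
    refine (singular.mul_continuousOn regular).congr fun x hx => ?_
    rw [uIoc_of_le (by norm_num)] at hx
    rw [← Real.mul_rpow (by linarith [hx.1]) (by linarith [hx.2])]
    ring_nf
  have right_half : IntervalIntegrable (fun x : ℝ => (1 - x ^ 2) ^ s) volume 0 1 := by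
    rw [IntervalIntegrable.iff_comp_neg]
    simpa using left_half.symm
  exact left_half.trans right_half

lemma hasDerivAt_one_sub_sq_rpow (s : ℝ) {x : ℝ} (hx : 1 - x ^ 2 ≠ 0) :
    HasDerivAt (fun x : ℝ => (1 - x ^ 2) ^ s) (-(2 * s * x) * (1 - x ^ 2) ^ (s - 1)) x := by
  have base : HasDerivAt (fun x : ℝ => 1 - x ^ 2) (-(2 * x)) x := by
    simpa using (hasDerivAt_pow 2 x).const_sub 1
  exact (base.rpow_const (Or.inl hx)).congr_deriv (by ring)

lemma integral_one_sub_sq_rpow_mul_deriv {s α : ℝ} (hs : 0 < s) (hα : α ∈ Icc (-1 : ℝ) 1)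
    {F : ℝ → ℝ} (hF : ContDiff ℝ 1 F) :
    ∫ x in (-1 : ℝ)..α, (1 - x ^ 2) ^ (s - 1) * ((1 - x ^ 2) * deriv F x - 2 * s * x * F x) =
      (1 - α ^ 2) ^ s * F α := by
  have hF_cont : Continuous F := hF.continuous
  have : Continuous (deriv F) := hF.continuous_deriv le_rfl
  have hcont : Continuous fun x => (1 - x ^ 2) ^ s * F x :=
    (Continuous.rpow_const (by fun_prop) fun _ => Or.inr hs.le).mul hF_cont
  have hderiv : ∀ x ∈ Ioo (-1) α, HasDerivAt (fun x => (1 - x ^ 2) ^ s * F x)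
      ((1 - x ^ 2) ^ (s - 1) * ((1 - x ^ 2) * deriv F x - 2 * s * x * F x)) x := by
    intro x hx
    have hpos : 0 < 1 - x ^ 2 := by nlinarith [hx.1, hx.2, hα.2]
    have hpow : (1 - x ^ 2) ^ s = (1 - x ^ 2) ^ (s - 1) * (1 - x ^ 2) := by
      rw [← Real.rpow_add_one hpos.ne', sub_add_cancel]
    refine ((hasDerivAt_one_sub_sq_rpow s hpos.ne').mul
      (hF.differentiable one_ne_zero x).hasDerivAt).congr_deriv ?_
    rw [hpow]
    ring
  have hint : IntervalIntegrable (fun x => (1 - x ^ 2) ^ (s - 1) *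
      ((1 - x ^ 2) * deriv F x - 2 * s * x * F x)) volume (-1) α := by
    refine ((intervalIntegrable_one_sub_sq_rpow (by linarith)).mono_set ?_).mul_continuousOn
      (Continuous.continuousOn (by fun_prop))
    rw [uIcc_of_le hα.1, uIcc_of_le (by norm_num)]
    exact Icc_subset_Icc_right hα.2
  rw [intervalIntegral.integral_eq_sub_of_hasDerivAt_of_le hα.1 hcont.continuousOn hderiv hint]
  simp [Real.zero_rpow hs.ne']

end WeightedIntegral

section MatrixEntries

variable {n : ℕ} {p : ℝ}

lemma Pmat_row_zero {w : ℕ} (hp : p + w ≠ 0) (x : ℝ) :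
    Pmat n p w x 0 = (1 / ((n + 1) * (p + w))) •
      ![p * geg ((n + 1) / 2) w x + x * deriv (geg ((n + 1) / 2) w) x,
        deriv (geg ((n + 1) / 2) w) x] := by
  have hl : -1 / 2 < ((n : ℝ) + 1) / 2 := by linarith [n.cast_nonneg (α := ℝ)]
  have hderiv : ∀ v : ℤ, deriv (geg ((n + 1) / 2) v) x = (n + 1) * geg ((n + 3) / 2) (v - 1) x := by
    intro v
    rw [deriv_geg hl]
    ring_nf
  have hrec := mul_deriv_geg_sub_deriv_geg_sub_one hl w x
  rw [hderiv (w - 1), sub_sub, one_add_one_eq_two] at hrec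
  ext k
  fin_cases k
  · simp only [Pmat, Fin.zero_eta, of_apply, cons_val', cons_val_zero, cons_val_fin_one,
      Pi.smul_apply, smul_eq_mul]
    field_simp
    push_cast at hrec
    linear_combination -hrec
  · simp only [Pmat, Fin.mk_one, of_apply, cons_val', cons_val_one, cons_val_fin_one,
      cons_val_zero, hderiv w, Pi.smul_apply, smul_eq_mul]
    field_simp

lemma Pmat_row_one {w : ℕ} (hp : n - p + w ≠ 0) (x : ℝ) :
    Pmat n p w x 1 = (1 / ((n + 1) * (n - p + w))) •
      ![deriv (geg ((n + 1) / 2) w) x,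
        (n - p) * geg ((n + 1) / 2) w x + x * deriv (geg ((n + 1) / 2) w) x] := by
  -- Exchanging `p` with `n - p` swaps the two rows of `Pmat` and reverses each of them.
  have hrow := Pmat_row_zero (n := n) hp x
  ext k
  fin_cases k
  · simpa [Pmat] using congrFun hrow 1
  · simpa [Pmat] using congrFun hrow 0

lemma Pmat_mul_Wmat_mul_Pmat_transpose_zero_one {i j : ℕ} (hi : p + i ≠ 0) (hj : n - p + j ≠ 0)
    (x : ℝ) :
    (Pmat n p i x * Wmat n p x * (Pmat n p j x)ᵀ) 0 1 =
      p * (n - p) / ((n + 1) ^ 2 * (p + i) * (n - p + j)) *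
        ((1 - x ^ 2) ^ ((n : ℝ) / 2 - 1) *
          ((1 - x ^ 2) * deriv (geg ((n + 1) / 2) i * geg ((n + 1) / 2) j) x -
            2 * (n / 2) * x * (geg ((n + 1) / 2) i * geg ((n + 1) / 2) j) x)) := by
  have hdiff : ∀ w : ℤ, DifferentiableAt ℝ (geg ((n + 1) / 2) w) x := fun w =>
    (contDiff_geg _ w).differentiable one_ne_zero x
  rw [deriv_mul (hdiff i) (hdiff j), Pi.mul_apply]
  simp only [Matrix.mul_apply, Matrix.transpose_apply, Fin.sum_univ_two, Pmat_row_zero hi,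
    Pmat_row_one hj, Wmat, Pi.smul_apply, Matrix.smul_apply, of_apply, cons_val', cons_val_zero,
    cons_val_one, cons_val_fin_one, smul_eq_mul]
  field_simp
  ring

end MatrixEntries

theorem stmt_17_general {n : ℕ} (hn : 0 < n) {p α : ℝ} (hα : α ∈ Set.Icc (-1 : ℝ) 1) {i j : ℕ}
    (hi : p + i ≠ 0) (hj : n - p + j ≠ 0) :
    ∫ x in (-1 : ℝ)..α, (Pmat n p i x * Wmat n p x * (Pmat n p j x)ᵀ) 0 1 =
      (1 - α ^ 2) ^ ((n : ℝ) / 2) * p * (n - p) / ((n + 1) ^ 2 * (p + i) * (n - p + j)) *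
        geg ((n + 1) / 2) i α * geg ((n + 1) / 2) j α := by
  simp_rw [Pmat_mul_Wmat_mul_Pmat_transpose_zero_one hi hj]
  have hF : ContDiff ℝ 1 (geg ((n + 1) / 2) i * geg ((n + 1) / 2) j) :=
    (contDiff_geg _ _).mul (contDiff_geg _ _)
  rw [intervalIntegral.integral_const_mul,
    integral_one_sub_sq_rpow_mul_deriv (by positivity) hα hF, Pi.mul_apply]
  ring

/-- The `(1,2)` entry of `M̃^{i,j} = ∫_{-1}^α P_i W_{p,n} P_j^T dx`. -/
theorem stmt_17 (n : ℕ) (hn : 1 ≤ n) (p : ℝ) (hp : 0 < p) (hpn : p < n)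
    (N : ℕ) (α : ℝ) (hα : α ∈ Set.Ioo (-1 : ℝ) 1) :
    ∀ i j : ℕ, i ≤ N → j ≤ N →
      (∫ x in (-1 : ℝ)..α, (Pmat n p i x * Wmat n p x * (Pmat n p j x)ᵀ) 0 1) =
        (1 - α ^ 2) ^ ((n : ℝ) / 2) * p * ((n : ℝ) - p) /
            (((n : ℝ) + 1) ^ 2 * (p + i) * ((n : ℝ) - p + j)) *
          geg (((n : ℝ) + 1) / 2) (i : ℤ) α * geg (((n : ℝ) + 1) / 2) (j : ℤ) α := by
  intro i j _ _
  exact stmt_17_general hn (Set.Ioo_subset_Icc_self hα) (by positivity)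
    (add_pos_of_pos_of_nonneg (sub_pos.2 hpn) j.cast_nonneg).ne'
end
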